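/- arXiv:2108.04729 — 5 statements merged into one kernel-verified Lean document; each statement's English description precedes it below -/
import Mathlib

section
/- Let n, k be integers with k ≥ 2 and k dividing n, let M be the zero-error matrix of an equipartition of [n] into k clusters, and let f_j ∈ ℝ^n denote the 0/1 indicator vector of the j-th cluster. For i ∈ {1,…,k−1} define v_i := (1/√(n/k))·( (1/√(i²+i))·Σ_{j=1}^{i} f_j − (i/√(i²+i))·f_{i+1} ). Then v_1,…,v_{k−1} are mutually orthogonal unit vectors, each v_i is an eigenvector of M with eigenvalue 2n/k, each v_i has equal coordinates on the vertices of each single cluster, and the coordinates of each v_i sum to 0. -/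
open scoped Classical

noncomputable def gAux (i m : ℕ) : ℝ := if m < i then 1 else if m = i then -(i : ℝ) else 0

lemma sum_three (A B : ℝ) (i k : ℕ) (h : i + 1 ≤ k) :
    ∑ m ∈ Finset.range k, (if m < i then A else if m = i then B else 0) = i * A + B := by
  induction k, h using Nat.le_induction with
  | base =>
    rw [Finset.sum_range_succ]
    have : ∑ m ∈ Finset.range i, (if m < i then A else if m = i then B else 0)
        = ∑ m ∈ Finset.range i, A := by
      apply Finset.sum_congr rfl
      intro m hm
      rw [if_pos (Finset.mem_range.mp hm)]
    rw [this]
    simp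
  | succ k hk ih =>
    rw [Finset.sum_range_succ, ih, if_neg (by omega), if_neg (by omega), add_zero]

lemma sum_gAux (i k : ℕ) (h : i + 1 ≤ k) : ∑ m ∈ Finset.range k, gAux i m = 0 := by
  unfold gAux
  rw [sum_three _ _ _ _ h]; ring

lemma sum_gAux_sq (i k : ℕ) (h : i + 1 ≤ k) :
    ∑ m ∈ Finset.range k, gAux i m ^ 2 = (i : ℝ) ^ 2 + i := by
  have : ∀ m, gAux i m ^ 2 = if m < i then (1 : ℝ) else if m = i then (i : ℝ) ^ 2 else 0 := by
    intro m; unfold gAux; split_ifs <;> simp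
  simp_rw [this]
  rw [sum_three _ _ _ _ h]; ring

lemma gAux_mul (i j m : ℕ) (h : i < j) : gAux i m * gAux j m = gAux i m := by
  unfold gAux
  by_cases hm : m < j
  · simp [hm]
  · rw [if_neg (show ¬ m < i by omega), if_neg (show ¬ m = i by omega), zero_mul]

lemma sum_cluster (n k : ℕ) (hdvd : k ∣ n) (hk : 2 ≤ k) (c : Fin n → Fin k)
    (hc : ∀ j : Fin k, (Finset.univ.filter fun i => c i = j).card = n / k) (h : ℕ → ℝ) :
    ∑ x, h (c x) = ((n : ℝ) / k) * ∑ m ∈ Finset.range k, h m := by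
  rw [← Fin.sum_univ_eq_sum_range, Finset.mul_sum,
    ← Finset.sum_fiberwise (s := Finset.univ) (g := c)]
  apply Finset.sum_congr rfl
  intro j _
  have : ∑ x ∈ Finset.univ.filter (fun i => c i = j), h (c x)
      = ∑ x ∈ Finset.univ.filter (fun i => c i = j), h j := by
    apply Finset.sum_congr rfl
    intro x hx
    rw [(Finset.mem_filter.mp hx).2]
  have hk0 : (k : ℝ) ≠ 0 := by positivity
  have h3 : ((n / k : ℕ) : ℝ) = (n : ℝ) / k := Nat.cast_div hdvd hk0
  rw [← h3, ← hc j, ← nsmul_eq_mul, ← Finset.sum_const]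
  convert this

theorem stmt1 (n k : ℕ) (hk : 2 ≤ k) (hn : 0 < n) (hdvd : k ∣ n)
    (c : Fin n → Fin k)
    (hc : ∀ j : Fin k, (Finset.univ.filter fun i => c i = j).card = n / k)
    (M : Matrix (Fin n) (Fin n) ℝ)
    (hM : ∀ i j, M i j = if c i = c j then (1 : ℝ) else -1)
    (f : ℕ → Fin n → ℝ)
    -- `f j` (0-based index `j`, corresponding to the paper's `f_{j+1}`) is the 0/1
    -- indicator vector of the `j`-th cluster
    (hf : ∀ j : ℕ, j < k → ∀ i : Fin n, f j i = if (c i : ℕ) = j then (1 : ℝ) else 0)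
    (v : ℕ → Fin n → ℝ)
    -- `v i` for `1 ≤ i ≤ k-1` is the paper's `v_i`; with 1-based cluster indicators
    -- `f_j = f (j-1)`, so `Σ_{j=1}^{i} f_j = Σ_{j ∈ range i} f j` and `f_{i+1} = f i`.
    (hv : ∀ i : ℕ, 1 ≤ i → i ≤ k - 1 → ∀ x : Fin n,
      v i x = (1 / Real.sqrt ((n : ℝ) / k)) *
        ((1 / Real.sqrt ((i : ℝ) ^ 2 + i)) * (∑ j ∈ Finset.range i, f j x) -
          ((i : ℝ) / Real.sqrt ((i : ℝ) ^ 2 + i)) * f i x)) :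
    ∀ i : ℕ, 1 ≤ i → i ≤ k - 1 →
      (∑ x, v i x ^ 2 = 1) ∧
      (∀ j : ℕ, 1 ≤ j → j ≤ k - 1 → i ≠ j → ∑ x, v i x * v j x = 0) ∧
      (M.mulVec (v i) = ((2 * n : ℝ) / k) • v i) ∧
      (∀ x y : Fin n, c x = c y → v i x = v i y) ∧
      (∑ x, v i x = 0) := by
  have hk0 : (0 : ℝ) < k := by positivity
  have hn0 : (0 : ℝ) < n := by exact_mod_cast hn
  have S := sum_cluster n k hdvd hk c hc
  obtain ⟨a, ha, hva⟩ : ∃ a : ℕ → ℝ,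
      (∀ i, 1 ≤ i → a i ^ 2 * ((n : ℝ) / k * ((i : ℝ) ^ 2 + i)) = 1) ∧
      ∀ i, 1 ≤ i → i ≤ k - 1 → ∀ x, v i x = a i * gAux i (c x) := by
    refine ⟨fun i => (1 / Real.sqrt ((n : ℝ) / k)) * (1 / Real.sqrt ((i : ℝ) ^ 2 + i)), ?_, ?_⟩
    · intro i hi
      have hi0 : (0 : ℝ) < i := by exact_mod_cast hi
      have h1 : (0 : ℝ) < (n : ℝ) / k := by positivity
      have h2 : (0 : ℝ) < (i : ℝ) ^ 2 + i := by positivity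
      simp only [mul_pow, div_pow, one_pow, Real.sq_sqrt h1.le, Real.sq_sqrt h2.le]
      field_simp
    · intro i hi hik x
      have hs : ∑ j ∈ Finset.range i, f j x = if (c x : ℕ) < i then (1 : ℝ) else 0 := by
        rw [Finset.sum_congr rfl (fun j hj =>
          hf j (by have := Finset.mem_range.mp hj; omega) x)]
        simp
      rw [hv i hi hik x, hs, hf i (by omega) x]
      unfold gAux
      by_cases h1 : (c x : ℕ) < i
      · simp [h1, h1.ne]
      · by_cases h2 : (c x : ℕ) = i
        · simp only [h2, lt_irrefl, if_true, if_false]; ring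
        · simp [h1, h2]
  intro i hi hik
  have hik' : i + 1 ≤ k := by omega
  have hsum : ∑ x, v i x = 0 := by
    simp_rw [hva i hi hik]
    rw [← Finset.mul_sum, S (fun m => gAux i m), sum_gAux i k hik']; ring
  refine ⟨?_, ?_, ?_, ?_, hsum⟩
  · simp_rw [hva i hi hik, mul_pow]
    rw [← Finset.mul_sum, S (fun m => gAux i m ^ 2), sum_gAux_sq i k hik']
    exact ha i hi
  · intro j hj hjk hij
    have key : ∑ x, gAux i (c x) * gAux j (c x) = 0 := by
      rw [S (fun m => gAux i m * gAux j m)]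
      rcases lt_or_gt_of_ne hij with h | h
      · simp_rw [gAux_mul i j _ h]
        rw [sum_gAux i k hik', mul_zero]
      · simp_rw [mul_comm (gAux i _), gAux_mul j i _ h]
        rw [sum_gAux j k (by omega), mul_zero]
    calc ∑ x, v i x * v j x = ∑ x, (a i * a j) * (gAux i (c x) * gAux j (c x)) := by
          apply Finset.sum_congr rfl
          intro x _
          rw [hva i hi hik, hva j hj hjk]; ring
      _ = 0 := by rw [← Finset.mul_sum, key, mul_zero]
  · funext x
    have h1 : ∀ y, M x y * v i y
        = 2 * a i * (if (c y : ℕ) = (c x : ℕ) then gAux i (c y) else 0) - v i y := by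
      intro y
      rw [hM, hva i hi hik]
      by_cases h : c x = c y
      · simp only [h, if_true]; ring
      · have h' : ¬ (c y : ℕ) = (c x : ℕ) := fun e => h (Fin.ext e.symm)
        simp only [h, h', if_false]; ring
    simp only [Matrix.mulVec, dotProduct, Pi.smul_apply, smul_eq_mul]
    simp_rw [h1]
    rw [Finset.sum_sub_distrib, hsum, ← Finset.mul_sum,
      S (fun m => if m = (c x : ℕ) then gAux i m else 0), Finset.sum_ite_eq',
      if_pos (Finset.mem_range.mpr (c x).2), hva i hi hik]
    ring
  · intro x y h
    rw [hva i hi hik, hva i hi hik, h]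
end

section
/- Let n, k be integers with k ≥ 2 and k dividing n, and fix an equipartition of {1,…,n} into k clusters of size n/k. Let x ∈ ℝ^n be a unit vector (‖x‖₂ = 1) such that x is constant on each cluster (for each cluster, all coordinates of x indexed by that cluster are equal) and the coordinates of x sum to 0. Writing x^i for the common coordinate of x on the i-th cluster, there exist clusters i ≠ j with |x^i − x^j| > 1/(k·√n). -/
open scoped Classical

theorem stmt2 (n k : ℕ) (hk : 2 ≤ k) (hn : 0 < n) (hdvd : k ∣ n)
    (c : Fin n → Fin k)
    (hc : ∀ j : Fin k, (Finset.univ.filter fun i => c i = j).card = n / k)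
    (x : Fin n → ℝ)
    (hunit : ∑ i, x i ^ 2 = 1)
    (hconst : ∀ i j, c i = c j → x i = x j)
    (hsum : ∑ i, x i = 0) :
    ∃ a b : Fin n, c a ≠ c b ∧ 1 / (k * Real.sqrt n) < |x a - x b| := by
  by_contra! hcon
  have hn' : (0:ℝ) < n := by exact_mod_cast hn
  have hk' : (2:ℝ) ≤ k := by exact_mod_cast hk
  have hle : ∀ a b : Fin n, (x a - x b) ^ 2 ≤ 1 / ((k:ℝ) ^ 2 * n) := by
    intro a b
    by_cases h : c a = c b
    · rw [hconst a b h, sub_self, zero_pow two_ne_zero]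
      positivity
    · have h1 := hcon a b h
      have h2 : |x a - x b| ^ 2 ≤ (1 / (k * Real.sqrt n)) ^ 2 := by
        gcongr
      rw [sq_abs, div_pow, mul_pow, Real.sq_sqrt hn'.le, one_pow] at h2
      exact h2
  let b : Fin n := ⟨0, hn⟩
  have hs : ∑ a, (x a - x b) ^ 2 = 1 + n * x b ^ 2 := by
    have h : ∀ a, (x a - x b) ^ 2 = x a ^ 2 - 2 * x b * x a + x b ^ 2 := fun a => by ring
    simp only [h, Finset.sum_add_distrib, Finset.sum_sub_distrib, ← Finset.mul_sum, hunit, hsum]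
    simp
  have hub : ∑ a, (x a - x b) ^ 2 ≤ n * (1 / ((k:ℝ) ^ 2 * n)) := by
    calc _ ≤ ∑ _a : Fin n, 1 / ((k:ℝ) ^ 2 * n) := Finset.sum_le_sum fun a _ => hle a b
      _ = _ := by simp
  have he : (n:ℝ) * (1 / ((k:ℝ) ^ 2 * n)) = 1 / (k:ℝ) ^ 2 := by
    field_simp
  have hlt : 1 / (k:ℝ) ^ 2 < 1 := by
    rw [div_lt_one (by positivity)]
    nlinarith
  have hnn : 0 ≤ (n:ℝ) * x b ^ 2 := by positivity
  linarith
end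

section
/- Let n, k be integers with k > 2 and k dividing n, and let P be the positive semidefinite zero-error matrix of an equipartition of [n] into k clusters (P_{ij} = 1 if i,j in the same cluster, −1/(k−1) otherwise). Then: ‖P‖_F = n/√(k−1); ‖P‖_op = n/(k−1); ‖P‖_SDP = n²/(k−1); and ‖P‖_{∞→1} = n²/(k−1) if k is even, while ‖P‖_{∞→1} = n²·(k+1)/k² if k is odd. -/
open scoped Classical

/-- The Frobenius norm of a real matrix. -/
noncomputable def frobNorm {n : ℕ} (A : Matrix (Fin n) (Fin n) ℝ) : ℝ :=
  Real.sqrt (∑ i, ∑ j, A i j ^ 2)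

/-- The ℓ2 operator norm of a real matrix: the maximum of `‖Ax‖₂` over unit vectors `x`. -/
noncomputable def opNorm {n : ℕ} (A : Matrix (Fin n) (Fin n) ℝ) : ℝ :=
  sSup {r : ℝ | ∃ x : Fin n → ℝ, (∑ i, x i ^ 2) = 1 ∧
    r = Real.sqrt (∑ i, (A.mulVec x i) ^ 2)}

/-- The ℓ∞-to-ℓ1 norm of a real matrix: the maximum of `xᵀAy` over sign vectors `x, y`. -/
noncomputable def inftyOneNorm {n : ℕ} (A : Matrix (Fin n) (Fin n) ℝ) : ℝ :=
  sSup {r : ℝ | ∃ x y : Fin n → ℝ, (∀ i, x i = 1 ∨ x i = -1) ∧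
    (∀ i, y i = 1 ∨ y i = -1) ∧ r = ∑ i, ∑ j, x i * A i j * y j}

/-- The SDP norm of a real matrix: the maximum of `Σ_{i,j} A i j ⟪x i, y j⟫` over
families of unit vectors `x_1,…,x_n, y_1,…,y_n ∈ ℝ^n`. -/
noncomputable def sdpNorm {n : ℕ} (A : Matrix (Fin n) (Fin n) ℝ) : ℝ :=
  sSup {r : ℝ | ∃ x y : Fin n → Fin n → ℝ, (∀ i, ∑ t, x i t ^ 2 = 1) ∧
    (∀ i, ∑ t, y i t ^ 2 = 1) ∧ r = ∑ i, ∑ j, A i j * ∑ t, x i t * y j t}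

/-- Summing a function of the cluster over all points. -/
lemma aux_sum_cluster {n k : ℕ} (c : Fin n → Fin k) (m : ℕ)
    (hc : ∀ j : Fin k, (Finset.univ.filter fun i => c i = j).card = m) (f : Fin k → ℝ) :
    ∑ i, f (c i) = m * ∑ l, f l := by
  rw [← Finset.sum_fiberwise (s := Finset.univ) (g := c), Finset.mul_sum]
  refine Finset.sum_congr rfl fun l _ => ?_
  rw [Finset.sum_congr rfl (g := fun _ => f l)]
  · rw [Finset.sum_const, hc l, nsmul_eq_mul]
  · intro i hi
    rw [(Finset.mem_filter.mp hi).2]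

lemma aux_two_mul {n : ℕ} (P : Matrix (Fin n) (Fin n) ℝ) (lam : ℝ) (hlam : 0 < lam)
    (hsymm : ∀ i j, P i j = P j i)
    (hsq : ∀ i l, ∑ j, P i j * P j l = lam * P i l) (x : Fin n → ℝ) :
    ∑ i, (∑ j, P i j * x j) ^ 2 ≤ lam ^ 2 * ∑ i, x i ^ 2 := by
  have h1 : ∑ i, (∑ j, P i j * x j) ^ 2 = lam * ∑ i, x i * ∑ j, P i j * x j := by
    have e : ∀ i, (∑ j, P i j * x j) ^ 2 = ∑ j, ∑ l, (P j i * P i l) * (x j * x l) := by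
      intro i
      rw [pow_two, Finset.sum_mul_sum]
      refine Finset.sum_congr rfl fun j _ => Finset.sum_congr rfl fun l _ => ?_
      rw [hsymm i j]; ring
    simp_rw [e]
    rw [Finset.sum_comm, Finset.mul_sum]
    refine Finset.sum_congr rfl fun j _ => ?_
    rw [Finset.sum_comm, Finset.mul_sum, Finset.mul_sum]
    refine Finset.sum_congr rfl fun l _ => ?_
    rw [← Finset.sum_mul, hsq]; ring
  have h2 : 0 ≤ ∑ i, (lam * x i - ∑ j, P i j * x j) ^ 2 :=
    Finset.sum_nonneg fun i _ => sq_nonneg _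
  have h3 : ∑ i, (lam * x i - ∑ j, P i j * x j) ^ 2
      = lam ^ 2 * ∑ i, x i ^ 2 - 2 * lam * (∑ i, x i * ∑ j, P i j * x j)
        + ∑ i, (∑ j, P i j * x j) ^ 2 := by
    rw [Finset.mul_sum, Finset.mul_sum, ← Finset.sum_sub_distrib, ← Finset.sum_add_distrib]
    refine Finset.sum_congr rfl fun i _ => ?_
    ring
  linarith

lemma aux_bilin {n : ℕ} (P : Matrix (Fin n) (Fin n) ℝ) (lam : ℝ) (hlam : 0 < lam)
    (hsymm : ∀ i j, P i j = P j i)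
    (hsq : ∀ i l, ∑ j, P i j * P j l = lam * P i l) (x y : Fin n → ℝ) :
    ∑ i, ∑ j, x i * P i j * y j ≤ lam / 2 * (∑ i, x i ^ 2 + ∑ i, y i ^ 2) := by
  have h := aux_two_mul P lam hlam hsymm hsq y
  have e : ∑ i, ∑ j, x i * P i j * y j = ∑ i, x i * ∑ j, P i j * y j := by
    refine Finset.sum_congr rfl fun i _ => ?_
    rw [Finset.mul_sum]
    refine Finset.sum_congr rfl fun j _ => ?_
    ring
  have h2 : 0 ≤ ∑ i, (lam * x i - ∑ j, P i j * y j) ^ 2 :=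
    Finset.sum_nonneg fun i _ => sq_nonneg _
  have h3 : ∑ i, (lam * x i - ∑ j, P i j * y j) ^ 2
      = lam ^ 2 * ∑ i, x i ^ 2 - 2 * lam * (∑ i, x i * ∑ j, P i j * y j)
        + ∑ i, (∑ j, P i j * y j) ^ 2 := by
    rw [Finset.mul_sum, Finset.mul_sum, ← Finset.sum_sub_distrib, ← Finset.sum_add_distrib]
    refine Finset.sum_congr rfl fun i _ => ?_
    ring
  rw [e]
  have h4 : lam * (2 * ∑ i, x i * ∑ j, P i j * y j)
      ≤ lam * (lam * (∑ i, x i ^ 2 + ∑ i, y i ^ 2)) := by nlinarith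
  have h5 := le_of_mul_le_mul_left h4 hlam
  linarith

/-- The combinatorial bound for an odd number of clusters. -/
lemma aux_odd {k : ℕ} (hk : Odd k) (m : ℝ) (hm : 0 ≤ m) (a b : Fin k → ℝ)
    (ha : ∀ j, |a j| ≤ m) (hb : ∀ j, |b j| ≤ m) :
    ∑ j, a j * b j - (∑ j, a j) * (∑ j, b j) / k ≤ m ^ 2 * (k - 1 / k) := by
  have hk0 : (0 : ℝ) < k := by exact_mod_cast hk.pos
  set A := ∑ j, a j with hA
  set t : Fin k → ℤ := fun j => if 0 ≤ a j - A / k then 1 else 0 with ht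
  set s : Fin k → ℝ := fun j => 2 * (t j : ℝ) - 1 with hs
  set S := ∑ j, s j with hS
  have hs1 : ∀ j, s j = 1 ∨ s j = -1 := by
    intro j
    simp only [hs, ht]
    split_ifs <;> norm_num
  have hSint : S = ((2 * ∑ j, t j - k : ℤ) : ℝ) := by
    rw [hS, hs]
    push_cast
    rw [Finset.sum_sub_distrib, Finset.mul_sum]
    simp
  have hS1 : 1 ≤ S ^ 2 := by
    have hne : (2 * ∑ j, t j - k : ℤ) ≠ 0 := by
      obtain ⟨r, hr⟩ := hk
      generalize ∑ j, t j = T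
      omega
    have : (1 : ℤ) ≤ (2 * ∑ j, t j - k : ℤ) ^ 2 := by
      have := sq_pos_of_ne_zero hne
      omega
    rw [hSint]
    exact_mod_cast this
  have hSk : |S| ≤ k := by
    calc |S| ≤ ∑ j, |s j| := Finset.abs_sum_le_sum_abs _ _
      _ ≤ ∑ j : Fin k, (1 : ℝ) := by
        refine Finset.sum_le_sum fun j _ => ?_
        rcases hs1 j with h | h <;> simp [h]
      _ = k := by simp
  have hSb : -1 ≤ S / k ∧ S / k ≤ 1 := by
    rw [abs_le] at hSk
    constructor
    · rw [le_div_iff₀ hk0]; linarith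
    · rw [div_le_iff₀ hk0]; linarith
  have c1 : ∑ j, a j * b j - A * (∑ j, b j) / k = ∑ j, b j * (a j - A / k) := by
    rw [mul_div_right_comm, Finset.mul_sum, ← Finset.sum_sub_distrib]
    refine Finset.sum_congr rfl fun j _ => ?_
    ring
  have c2 : ∑ j, b j * (a j - A / k) ≤ ∑ j, m * (s j * (a j - A / k)) := by
    refine Finset.sum_le_sum fun j _ => ?_
    have hbj := abs_le.mp (hb j)
    by_cases h : 0 ≤ a j - A / k
    · have : s j = 1 := by simp only [hs, ht, if_pos h]; norm_num
      rw [this]; nlinarith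
    · have : s j = -1 := by simp only [hs, ht, if_neg h]; norm_num
      rw [this]; push Not at h; nlinarith
  have c3 : ∑ j, m * (s j * (a j - A / k)) = m * ∑ j, a j * (s j - S / k) := by
    rw [← Finset.mul_sum]
    congr 1
    have e1 : ∑ j, s j * (a j - A / k) = ∑ j, s j * a j - S * (A / k) := by
      rw [hS, Finset.sum_mul, ← Finset.sum_sub_distrib]
      exact Finset.sum_congr rfl fun j _ => by ring
    have e2 : ∑ j, a j * (s j - S / k) = ∑ j, s j * a j - A * (S / k) := by
      rw [hA, Finset.sum_mul, ← Finset.sum_sub_distrib]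
      exact Finset.sum_congr rfl fun j _ => by ring
    rw [e1, e2]; ring
  have c4 : ∑ j, a j * (s j - S / k) ≤ ∑ j, m * (1 - s j * (S / k)) := by
    refine Finset.sum_le_sum fun j _ => ?_
    have haj := abs_le.mp (ha j)
    rcases hs1 j with h | h <;> rw [h] <;> nlinarith [hSb.1, hSb.2]
  have c5 : ∑ j, m * (1 - s j * (S / k)) = m * (k - S ^ 2 / k) := by
    rw [← Finset.mul_sum, Finset.sum_sub_distrib, ← Finset.sum_mul, ← hS]
    simp; left; ring
  have c6 : 1 / (k : ℝ) ≤ S ^ 2 / k := by gcongr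
  rw [c1]
  refine c2.trans ?_
  rw [c3]
  rw [c5] at c4
  have := mul_le_mul_of_nonneg_left c4 hm
  have h7 : m ^ 2 * (k - S ^ 2 / k) ≤ m ^ 2 * (k - 1 / k) := by gcongr
  nlinarith

theorem stmt12 (n k : ℕ) (hk : 2 < k) (hn : 0 < n) (hdvd : k ∣ n)
    (c : Fin n → Fin k)
    (hc : ∀ j : Fin k, (Finset.univ.filter fun i => c i = j).card = n / k)
    (P : Matrix (Fin n) (Fin n) ℝ)
    (hP : ∀ i j, P i j = if c i = c j then (1 : ℝ) else -1 / ((k : ℝ) - 1)) :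
    frobNorm P = n / Real.sqrt ((k : ℝ) - 1) ∧
    opNorm P = n / ((k : ℝ) - 1) ∧
    sdpNorm P = (n : ℝ) ^ 2 / ((k : ℝ) - 1) ∧
    (Even k → inftyOneNorm P = (n : ℝ) ^ 2 / ((k : ℝ) - 1)) ∧
    (Odd k → inftyOneNorm P = (n : ℝ) ^ 2 * ((k : ℝ) + 1) / (k : ℝ) ^ 2) := by
  obtain ⟨m, rfl⟩ := hdvd
  have hk0 : 0 < k := by omega
  rw [Nat.mul_div_cancel_left m hk0] at hc
  have hm0 : 0 < m := Nat.pos_of_mul_pos_left hn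
  have hmR : (0 : ℝ) < m := by exact_mod_cast hm0
  have hkR : (2 : ℝ) < k := by exact_mod_cast hk
  have hk1 : (0 : ℝ) < (k : ℝ) - 1 := by linarith
  have hkne : (k : ℝ) ≠ 0 := by positivity
  have hk1ne : (k : ℝ) - 1 ≠ 0 := hk1.ne'
  have hnc : ((k * m : ℕ) : ℝ) = k * m := by push_cast; ring
  obtain ⟨lam, hlamdef⟩ : ∃ lam : ℝ, lam = k * m / ((k : ℝ) - 1) := ⟨_, rfl⟩
  have hlam : 0 < lam := by rw [hlamdef]; positivity
  have hP' : ∀ i j, P i j = (k / ((k : ℝ) - 1)) * ((if c i = c j then 1 else 0) - 1 / k) := by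
    intro i j
    rw [hP]
    split_ifs <;> field_simp
    ring
  have hdiag : ∀ i, P i i = 1 := fun i => by rw [hP, if_pos rfl]
  have hsymm : ∀ i j, P i j = P j i := by
    intro i j
    rw [hP, hP]
    simp only [eq_comm]
  have hsq : ∀ i l, ∑ j, P i j * P j l = lam * P i l := by
    intro i l
    simp_rw [hP']
    rw [aux_sum_cluster c m hc (fun s => (k / ((k : ℝ) - 1) * ((if c i = s then 1 else 0) - 1 / k))
      * (k / ((k : ℝ) - 1) * ((if s = c l then 1 else 0) - 1 / k)))]
    have e : ∀ s : Fin k, (k / ((k : ℝ) - 1) * ((if c i = s then 1 else 0) - 1 / k))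
      * (k / ((k : ℝ) - 1) * ((if s = c l then 1 else 0) - 1 / k))
      = (k / ((k : ℝ) - 1)) ^ 2 * ((if c i = s then (if s = c l then (1 : ℝ) else 0) else 0)
        - (if c i = s then (1 / k : ℝ) else 0) - (if s = c l then (1 / k : ℝ) else 0)
        + 1 / k * (1 / k)) := by
      intro s
      split_ifs <;> ring
    simp_rw [e]
    rw [← Finset.mul_sum, Finset.sum_add_distrib, Finset.sum_sub_distrib, Finset.sum_sub_distrib]
    simp only [Finset.sum_ite_eq, Finset.sum_ite_eq', Finset.mem_univ, if_true,
      Finset.sum_const, Finset.card_univ, Fintype.card_fin, nsmul_eq_mul]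
    rw [hlamdef]
    field_simp
    ring
  have hrow : ∀ i, ∑ j, P i j ^ 2 = lam := by
    intro i
    have := hsq i i
    rw [hdiag, mul_one] at this
    rw [← this]
    refine Finset.sum_congr rfl fun j _ => ?_
    rw [hsymm j i, pow_two]
  have hquad : ∀ x y : Fin (k * m) → ℝ, ∑ i, ∑ j, x i * P i j * y j
      = (k / ((k : ℝ) - 1)) * (∑ l, (∑ i with c i = l, x i) * (∑ i with c i = l, y i)
        - (∑ l, ∑ i with c i = l, x i) * (∑ l, ∑ i with c i = l, y i) / k) := by
    intro x y
    have e1 : ∑ l, (∑ i with c i = l, x i) * (∑ i with c i = l, y i)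
        = ∑ i, ∑ j, (if c i = c j then x i * y j else 0) := by
      simp_rw [Finset.sum_filter, Finset.sum_mul_sum]
      rw [Finset.sum_comm]
      refine Finset.sum_congr rfl fun i _ => ?_
      rw [Finset.sum_comm]
      refine Finset.sum_congr rfl fun j _ => ?_
      rw [Finset.sum_eq_single (c i)]
      · by_cases h : c i = c j
        · simp [h]
        · have h' : ¬ c j = c i := fun h' => h h'.symm
          simp [h, h']
      · intro l _ hl
        rw [if_neg (fun h => hl h.symm), zero_mul]
      · simp
    rw [e1, Finset.sum_fiberwise, Finset.sum_fiberwise, Finset.sum_mul_sum, Finset.sum_div,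
      ← Finset.sum_sub_distrib, Finset.mul_sum]
    refine Finset.sum_congr rfl fun i _ => ?_
    rw [Finset.sum_div, ← Finset.sum_sub_distrib, Finset.mul_sum]
    refine Finset.sum_congr rfl fun j _ => ?_
    rw [hP']
    split_ifs <;> ring
  have hone : ∀ x : Fin (k * m) → ℝ, (∀ i, x i = 1 ∨ x i = -1) → ∑ i, x i ^ 2 = k * m := by
    intro x hx
    rw [Finset.sum_congr rfl (g := fun _ => (1 : ℝ))]
    · simp
    · intro i _
      rcases hx i with h | h <;> simp [h]
  -- the alternating sign vector
  obtain ⟨z, hz, hzval⟩ : ∃ z : Fin (k * m) → ℝ, (∀ i, z i = 1 ∨ z i = -1) ∧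
      ∑ i, ∑ j, z i * P i j * z j = (k / ((k : ℝ) - 1)) * ((m : ℝ) ^ 2 *
        (k - (if Even k then 0 else 1) / k)) := by
    refine ⟨fun i => (-1) ^ (c i : ℕ), fun i => neg_one_pow_eq_or ℝ _, ?_⟩
    rw [hquad]
    have e : ∀ l : Fin k, ∑ i with c i = l, ((-1 : ℝ)) ^ (c i : ℕ) = m * (-1) ^ (l : ℕ) := by
      intro l
      rw [Finset.sum_congr rfl (g := fun _ => (-1 : ℝ) ^ (l : ℕ))]
      · rw [Finset.sum_const, hc l, nsmul_eq_mul]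
      · intro i hi
        rw [(Finset.mem_filter.mp hi).2]
    simp_rw [e]
    have e2 : ∑ l : Fin k, (m * (-1 : ℝ) ^ (l : ℕ)) * (m * (-1 : ℝ) ^ (l : ℕ)) = k * m ^ 2 := by
      rw [Finset.sum_congr rfl (g := fun _ => (m : ℝ) ^ 2)]
      · simp
      · intro l _
        rcases neg_one_pow_eq_or ℝ (l : ℕ) with h | h <;> rw [h] <;> ring
    have e3 : ∑ l : Fin k, (m * (-1 : ℝ) ^ (l : ℕ)) = m * (if Even k then 0 else 1) := by
      rw [← Finset.mul_sum, Fin.sum_univ_eq_sum_range (fun i => (-1 : ℝ) ^ i), neg_one_geom_sum]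
    rw [e2, e3]
    split_ifs <;> ring
  refine ⟨?_, ?_, ?_, ?_, ?_⟩
  · unfold frobNorm
    simp_rw [hrow]
    rw [Finset.sum_const, Finset.card_univ, Fintype.card_fin, nsmul_eq_mul, hlamdef, hnc,
      ← mul_div_assoc, Real.sqrt_div (by positivity), Real.sqrt_mul_self (by positivity)]
  · rw [hnc, ← hlamdef]
    unfold opNorm
    apply IsGreatest.csSup_eq
    constructor
    · let i0 : Fin (k * m) := ⟨0, hn⟩
      refine ⟨fun j => P i0 j / Real.sqrt lam, ?_, ?_⟩
      · simp_rw [div_pow]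
        rw [← Finset.sum_div, hrow, Real.sq_sqrt hlam.le, div_self hlam.ne']
      · symm
        have e : ∀ i, (P.mulVec (fun j => P i0 j / Real.sqrt lam) i) ^ 2 = lam * P i0 i ^ 2 := by
          intro i
          have : P.mulVec (fun j => P i0 j / Real.sqrt lam) i = lam * P i0 i / Real.sqrt lam := by
            rw [hsymm i0 i, ← hsq i i0]
            simp only [Matrix.mulVec, dotProduct]
            rw [Finset.sum_div]
            refine Finset.sum_congr rfl fun j _ => ?_
            rw [hsymm i0 j]; ring
          rw [this, div_pow, Real.sq_sqrt hlam.le]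
          field_simp
        simp_rw [e]
        rw [← Finset.mul_sum, hrow, Real.sqrt_mul_self hlam.le]
    · rintro r ⟨x, hx, rfl⟩
      have h := aux_two_mul P lam hlam hsymm hsq x
      rw [hx, mul_one] at h
      exact Real.sqrt_le_iff.mpr ⟨hlam.le, h⟩
  · have hval : ((k * m : ℕ) : ℝ) ^ 2 / ((k : ℝ) - 1) = lam * (k * m) := by
      rw [hnc, hlamdef]; ring
    rw [hval]
    unfold sdpNorm
    apply IsGreatest.csSup_eq
    constructor
    · have hu : ∀ i, ∑ t, (P i t / Real.sqrt lam) ^ 2 = 1 := by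
        intro i
        simp_rw [div_pow]
        rw [← Finset.sum_div, hrow, Real.sq_sqrt hlam.le, div_self hlam.ne']
      refine ⟨fun i t => P i t / Real.sqrt lam, fun i t => P i t / Real.sqrt lam, hu, hu, ?_⟩
      have e : ∀ i j, ∑ t, P i t / Real.sqrt lam * (P j t / Real.sqrt lam) = P i j := by
        intro i j
        have : ∀ t, P i t / Real.sqrt lam * (P j t / Real.sqrt lam) = P i t * P t j / lam := by
          intro t
          rw [div_mul_div_comm, Real.mul_self_sqrt hlam.le, hsymm j t]
        simp_rw [this]
        rw [← Finset.sum_div, hsq, mul_div_cancel_left₀ _ hlam.ne']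
      simp_rw [e, ← pow_two, hrow]
      simp
      ring
    · rintro r ⟨x, y, hx, hy, rfl⟩
      have e : ∑ i, ∑ j, P i j * ∑ t, x i t * y j t
          = ∑ t, ∑ i, ∑ j, x i t * P i j * y j t := by
        rw [Finset.sum_comm]
        simp_rw [Finset.mul_sum]
        rw [Finset.sum_comm]
        rw [Finset.sum_comm (s := (Finset.univ : Finset (Fin (k * m))))
          (f := fun t i => ∑ j, x i t * P i j * y j t)]
        refine Finset.sum_congr rfl fun i _ => ?_
        rw [Finset.sum_comm]
        refine Finset.sum_congr rfl fun j _ => Finset.sum_congr rfl fun t _ => ?_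
        ring
      rw [e]
      calc ∑ t, ∑ i, ∑ j, x i t * P i j * y j t
          ≤ ∑ t, lam / 2 * (∑ i, x i t ^ 2 + ∑ i, y i t ^ 2) :=
            Finset.sum_le_sum fun t _ =>
              aux_bilin P lam hlam hsymm hsq (fun i => x i t) (fun i => y i t)
        _ = lam * (k * m) := by
            rw [← Finset.mul_sum, Finset.sum_add_distrib, Finset.sum_comm]
            rw [Finset.sum_comm (f := fun t i => y i t ^ 2)]
            simp_rw [hx, hy]
            simp
            ring
  · intro hev
    rw [if_pos hev] at hzval
    unfold inftyOneNorm
    apply IsGreatest.csSup_eq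
    constructor
    · refine ⟨z, z, hz, hz, ?_⟩
      rw [hzval, hnc]
      field_simp
      ring
    · rintro r ⟨x, y, hx, hy, rfl⟩
      refine (aux_bilin P lam hlam hsymm hsq x y).trans (le_of_eq ?_)
      rw [hone x hx, hone y hy, hnc, hlamdef]
      ring
  · intro hodd
    rw [if_neg (Nat.not_even_iff_odd.mpr hodd)] at hzval
    have hval : ((k * m : ℕ) : ℝ) ^ 2 * ((k : ℝ) + 1) / (k : ℝ) ^ 2
        = (k / ((k : ℝ) - 1)) * ((m : ℝ) ^ 2 * (k - 1 / k)) := by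
      rw [hnc]
      field_simp
      ring
    rw [hval]
    unfold inftyOneNorm
    apply IsGreatest.csSup_eq
    constructor
    · exact ⟨z, z, hz, hz, hzval.symm⟩
    · rintro r ⟨x, y, hx, hy, rfl⟩
      rw [hquad]
      have hab : ∀ x : Fin (k * m) → ℝ, (∀ i, x i = 1 ∨ x i = -1) →
          ∀ l : Fin k, |∑ i with c i = l, x i| ≤ m := by
        intro x hx l
        calc |∑ i with c i = l, x i| ≤ ∑ i with c i = l, |x i| := Finset.abs_sum_le_sum_abs _ _
          _ = ∑ i with c i = l, (1 : ℝ) := by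
            refine Finset.sum_congr rfl fun i _ => ?_
            rcases hx i with h | h <;> simp [h]
          _ = m := by rw [Finset.sum_const, hc l]; simp
      have := aux_odd hodd (m : ℝ) hmR.le _ _ (hab x hx) (hab y hy)
      exact mul_le_mul_of_nonneg_left this (by positivity)
end

section
/- Let n, k be integers with k > 2 and k dividing n, and let P be the matrix of an equipartition of [n] into k clusters with P_{ij} = 1 if i,j in the same cluster and −1/(k−1) otherwise. Then P is symmetric positive semidefinite of rank k−1, and has exactly two distinct eigenvalues: n/(k−1), whose eigenspace has dimension k−1 and is exactly the set of vectors in ℝ^n that are constant on each cluster and whose coordinates sum to 0; and 0, whose eigenspace has dimension n−k+1. -/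
open scoped Classical

theorem stmt13 (n k : ℕ) (hk : 2 < k) (hn : 0 < n) (hdvd : k ∣ n)
    (c : Fin n → Fin k)
    (hc : ∀ j : Fin k, (Finset.univ.filter fun i => c i = j).card = n / k)
    (P : Matrix (Fin n) (Fin n) ℝ)
    (hP : ∀ i j, P i j = if c i = c j then (1 : ℝ) else -1 / ((k : ℝ) - 1)) :
    P.IsSymm ∧
    P.PosSemidef ∧
    P.rank = k - 1 ∧
    ((Module.End.eigenspace (Matrix.toLin' P) ((n : ℝ) / ((k : ℝ) - 1)) :
          Submodule ℝ (Fin n → ℝ)) : Set (Fin n → ℝ)) =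
      {x | (∀ i j, c i = c j → x i = x j) ∧ ∑ i, x i = 0} ∧
    Module.finrank ℝ (Module.End.eigenspace (Matrix.toLin' P) ((n : ℝ) / ((k : ℝ) - 1))) =
      k - 1 ∧
    Module.finrank ℝ (Module.End.eigenspace (Matrix.toLin' P) (0 : ℝ)) = n - k + 1 ∧
    Module.End.HasEigenvalue (Matrix.toLin' P) ((n : ℝ) / ((k : ℝ) - 1)) ∧
    Module.End.HasEigenvalue (Matrix.toLin' P) (0 : ℝ) ∧
    ((n : ℝ) / ((k : ℝ) - 1) ≠ 0) ∧
    (∀ t : ℝ, Module.End.HasEigenvalue (Matrix.toLin' P) t →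
      t = (n : ℝ) / ((k : ℝ) - 1) ∨ t = 0) := by
  obtain ⟨m, rfl⟩ := hdvd
  have hk0 : 0 < k := by omega
  have hm : 0 < m := Nat.pos_of_mul_pos_left hn
  rw [Nat.mul_div_cancel_left _ hk0] at hc
  have hkR : (2 : ℝ) < k := by exact_mod_cast hk
  have hmR : (0 : ℝ) < m := by exact_mod_cast hm
  have hk1 : (k : ℝ) - 1 ≠ 0 := by linarith
  have hk1p : (0 : ℝ) < (k : ℝ) - 1 := by linarith
  set l : ℝ := ((k * m : ℕ) : ℝ) / ((k : ℝ) - 1) with hl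
  have hlpos : 0 < l := by
    rw [hl]; push_cast; positivity
  have hsymm : P.IsSymm := by
    ext i j
    simp only [Matrix.transpose_apply, hP, eq_comm]
  have hsum : ∀ g : Fin k → ℝ, ∑ i, g (c i) = m * ∑ j, g j := by
    intro g
    rw [← Finset.sum_fiberwise Finset.univ c (fun i => g (c i)), Finset.mul_sum]
    refine Finset.sum_congr rfl fun j _ => ?_
    rw [Finset.sum_congr rfl (g := fun _ => g j)]
    · rw [Finset.sum_const, hc, nsmul_eq_mul]
    · intro i hi
      rw [(Finset.mem_filter.mp hi).2]
  have hS : ∀ x : Fin (k * m) → ℝ, ∑ j, (∑ i, if c i = j then x i else 0) = ∑ i, x i := by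
    intro x
    rw [Finset.sum_comm]
    simp
  have hform : ∀ (x : Fin (k * m) → ℝ) i, (P.mulVec x) i =
      (k / ((k : ℝ) - 1)) * (∑ i', if c i' = c i then x i' else 0)
        - (∑ i', x i') / ((k : ℝ) - 1) := by
    intro x i
    rw [Finset.mul_sum, Finset.sum_div, ← Finset.sum_sub_distrib]
    change ∑ j, P i j * x j = _
    refine Finset.sum_congr rfl fun j _ => ?_
    rw [hP]
    by_cases h : c i = c j
    · simp only [h, if_true]
      field_simp
    · simp only [h, Ne.symm h, if_false]
      ring
  have hA : ∀ x : Fin (k * m) → ℝ, (∀ i j, c i = c j → P.mulVec x i = P.mulVec x j) ∧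
      ∑ i, P.mulVec x i = 0 := by
    intro x
    constructor
    · intro i j h
      rw [hform, hform, h]
    · simp only [hform]
      rw [Finset.sum_sub_distrib, ← Finset.mul_sum,
        hsum (fun j => ∑ i', if c i' = j then x i' else 0), hS]
      simp
      ring
  have hB : ∀ x : Fin (k * m) → ℝ, (∀ i j, c i = c j → x i = x j) → ∑ i, x i = 0 →
      P.mulVec x = l • x := by
    intro x h1 h2
    ext i
    have h3 : (∑ i', if c i' = c i then x i' else 0) =
        ∑ i', if c i' = c i then x i else 0 := by
      refine Finset.sum_congr rfl fun j _ => ?_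
      by_cases h : c j = c i
      · simp [h, h1 j i h]
      · simp [h]
    rw [hform, h2, h3]
    · rw [← Finset.sum_filter, Finset.sum_const, hc, hl]
      simp
      ring
  have hPP : ∀ x, P.mulVec (P.mulVec x) = l • P.mulVec x := fun x => hB _ (hA x).1 (hA x).2
  have hmul : P * P = l • P := by
    apply Matrix.toLin'.injective
    refine LinearMap.ext fun x => ?_
    rw [Matrix.toLin'_mul, LinearMap.comp_apply, map_smul, LinearMap.smul_apply,
      Matrix.toLin'_apply, Matrix.toLin'_apply]
    exact hPP x
  have hmem : ∀ x, x ∈ Module.End.eigenspace (Matrix.toLin' P) l ↔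
      ((∀ i j, c i = c j → x i = x j) ∧ ∑ i, x i = 0) := by
    intro x
    rw [Module.End.mem_eigenspace_iff, Matrix.toLin'_apply]
    constructor
    · intro h
      have hx : x = P.mulVec (l⁻¹ • x) := by
        rw [Matrix.mulVec_smul, h, smul_smul, inv_mul_cancel₀ hlpos.ne', one_smul]
      rw [hx]
      exact hA _
    · rintro ⟨h1, h2⟩
      exact hB x h1 h2
  have hrange : LinearMap.range (Matrix.toLin' P) =
      Module.End.eigenspace (Matrix.toLin' P) l := by
    ext x
    constructor
    · rintro ⟨y, rfl⟩
      rw [hmem, Matrix.toLin'_apply]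
      exact hA y
    · intro h
      rw [Module.End.mem_eigenspace_iff] at h
      refine ⟨l⁻¹ • x, ?_⟩
      rw [map_smul, h, smul_smul, inv_mul_cancel₀ hlpos.ne', one_smul]
  have hsurj : Function.Surjective c := by
    intro j
    have : 0 < (Finset.univ.filter fun i => c i = j).card := by rw [hc]; exact hm
    obtain ⟨i, hi⟩ := Finset.card_pos.mp this
    exact ⟨i, (Finset.mem_filter.mp hi).2⟩
  have hdim : Module.finrank ℝ (Module.End.eigenspace (Matrix.toLin' P) l) = k - 1 := by
    let φ : (Fin k → ℝ) →ₗ[ℝ] ℝ := ∑ j, LinearMap.proj j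
    have hφ : ∀ y, φ y = ∑ j, y j := fun y => by simp [φ]
    let f : (Fin k → ℝ) →ₗ[ℝ] (Fin (k * m) → ℝ) := LinearMap.funLeft ℝ ℝ c
    have hf : Function.Injective f := LinearMap.funLeft_injective_of_surjective ℝ ℝ c hsurj
    have hV : Module.End.eigenspace (Matrix.toLin' P) l = (LinearMap.ker φ).map f := by
      ext x
      rw [hmem, Submodule.mem_map]
      constructor
      · rintro ⟨h1, h2⟩
        have hx : ∀ i, x (Function.surjInv hsurj (c i)) = x i :=
          fun i => h1 _ _ (Function.surjInv_eq hsurj _)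
        refine ⟨fun j => x (Function.surjInv hsurj j), ?_, ?_⟩
        · rw [LinearMap.mem_ker, hφ]
          have h3 := hsum (fun j => x (Function.surjInv hsurj j))
          simp only [hx, h2] at h3
          exact (mul_eq_zero.mp h3.symm).resolve_left hmR.ne'
        · ext i
          exact hx i
      · rintro ⟨y, hy, rfl⟩
        rw [LinearMap.mem_ker, hφ] at hy
        constructor
        · intro i j h
          simp [f, LinearMap.funLeft_apply, h]
        · have h3 := hsum y
          rw [hy, mul_zero] at h3
          exact h3
    rw [hV, ← (Submodule.equivMapOfInjective f hf (LinearMap.ker φ)).finrank_eq]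
    have h4 := LinearMap.finrank_range_add_finrank_ker φ
    have h5 : LinearMap.range φ = ⊤ := by
      rw [LinearMap.range_eq_top]
      intro r
      refine ⟨Pi.single ⟨0, hk0⟩ r, ?_⟩
      rw [hφ]; simp
    rw [h5] at h4
    simp at h4
    omega
  have hker : Module.finrank ℝ (Module.End.eigenspace (Matrix.toLin' P) (0 : ℝ)) =
      k * m - k + 1 := by
    have h4 := LinearMap.finrank_range_add_finrank_ker (Matrix.toLin' P)
    rw [hrange, hdim] at h4
    rw [Module.End.eigenspace_zero]
    simp at h4
    have : k ≤ k * m := Nat.le_mul_of_pos_right k hm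
    omega
  refine ⟨hsymm, ?_, ?_, ?_, hdim, hker, ?_, ?_, hlpos.ne', ?_⟩
  · have h : P = l⁻¹ • (P.conjTranspose * P) := by
      rw [Matrix.conjTranspose_eq_transpose_of_trivial, hsymm.eq, hmul, smul_smul,
        inv_mul_cancel₀ hlpos.ne', one_smul]
    rw [h]
    exact (Matrix.posSemidef_conjTranspose_mul_self P).smul (inv_nonneg.mpr hlpos.le)
  · rw [Matrix.rank, ← Matrix.toLin'_apply', hrange, hdim]
  · ext x
    exact hmem x
  · rw [Module.End.hasEigenvalue_iff]
    intro h
    rw [h, finrank_bot] at hdim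
    omega
  · rw [Module.End.hasEigenvalue_iff]
    intro h
    rw [h, finrank_bot] at hker
    omega
  · intro t ht
    obtain ⟨v, hv⟩ := ht.exists_hasEigenvector
    have h1 := hv.apply_eq_smul
    rw [Matrix.toLin'_apply] at h1
    have h2 := hPP v
    rw [h1, Matrix.mulVec_smul, h1, smul_smul, smul_smul, ← sub_eq_zero, ← sub_smul] at h2
    have h3 := (smul_eq_zero.mp h2).resolve_right hv.2
    rw [← sub_mul] at h3
    rcases mul_eq_zero.mp h3 with h | h
    · left; linarith
    · right; exact h
end

section
/- Let n, k be integers with k > 2 and k dividing n, let P be the matrix with P_{ij} = 1 for i,j in the same cluster and −1/(k−1) otherwise, let ε > 0 and f ≥ 0. Let Q ∈ ℝ^{n×n} be a symmetric matrix with ‖Q − 2ε·P‖_{∞→1} ≤ f, and let X ∈ ℝ^{n×n} be a symmetric positive semidefinite matrix with X_{ii} = 1 for all i that attains the SDP norm of Q, i.e. Σ_{i,j} Q_{ij}·X_{ij} = ‖Q‖_SDP. Then Σ_{i,j} P_{ij}·X_{ij} ≥ n²/(k−1) − (2/ε)·f. -/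
open scoped Classical

noncomputable def sgnv (t : ℝ) : ℝ := if 0 ≤ t then 1 else -1

lemma sgnv_cases (t : ℝ) : sgnv t = 1 ∨ sgnv t = -1 := by
  unfold sgnv; split_ifs <;> simp

lemma sgnv_measurable : Measurable sgnv :=
  Measurable.ite measurableSet_Ici measurable_const measurable_const

section
open MeasureTheory
open scoped RealInnerProductSpace
variable {ι : Type} [Fintype ι]

noncomputable def bm (ι : Type) [Fintype ι] : Measure (EuclideanSpace ℝ ι) :=
  volume.restrict (Metric.ball 0 1)

instance : IsFiniteMeasure (bm ι) := by
  unfold bm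
  exact isFiniteMeasure_restrict.2 (measure_ball_lt_top).ne

lemma bm_pos : 0 < (bm ι).real Set.univ := by
  unfold bm
  rw [measureReal_restrict_apply_univ]
  exact ENNReal.toReal_pos (Metric.measure_ball_pos _ _ one_pos).ne' (measure_ball_lt_top).ne

lemma sg_meas (u : EuclideanSpace ℝ ι) : Measurable (fun g => sgnv ⟪g, u⟫) :=
  sgnv_measurable.comp (by fun_prop)

lemma sgsg_int (u v : EuclideanSpace ℝ ι) :
    Integrable (fun g => sgnv ⟪g, u⟫ * sgnv ⟪g, v⟫) (bm ι) := by
  refine Integrable.of_bound ((sg_meas u).mul (sg_meas v)).aestronglyMeasurable 1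
    (Filter.Eventually.of_forall fun g => ?_)
  rcases sgnv_cases ⟪g, u⟫ with h | h <;> rcases sgnv_cases ⟪g, v⟫ with hh | hh <;> simp [h, hh]

noncomputable def DD (u v : EuclideanSpace ℝ ι) : ℝ :=
  ∫ g, (1 - sgnv ⟪g, u⟫ * sgnv ⟪g, v⟫) ∂(bm ι)

lemma dd_int (u v : EuclideanSpace ℝ ι) :
    Integrable (fun g => 1 - sgnv ⟪g, u⟫ * sgnv ⟪g, v⟫) (bm ι) :=
  (integrable_const _).sub (sgsg_int u v)

lemma DD_symm (u v : EuclideanSpace ℝ ι) : DD u v = DD v u := by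
  simp only [DD, mul_comm]

lemma DD_nonneg (u v : EuclideanSpace ℝ ι) : 0 ≤ DD u v := by
  refine integral_nonneg fun g => ?_
  rcases sgnv_cases ⟪g, u⟫ with h | h <;> rcases sgnv_cases ⟪g, v⟫ with hh | hh <;> simp [h, hh]

lemma DD_self (u : EuclideanSpace ℝ ι) : DD u u = 0 := by
  unfold DD
  rw [integral_eq_zero_of_ae]
  refine Filter.Eventually.of_forall fun g => ?_
  rcases sgnv_cases ⟪g, u⟫ with h | h <;> simp [h]

lemma DD_iso (R : EuclideanSpace ℝ ι ≃ₗᵢ[ℝ] EuclideanSpace ℝ ι) (u v : EuclideanSpace ℝ ι) :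
    DD (R u) (R v) = DD u v := by
  have hp : MeasurePreserving R (bm ι) (bm ι) := by
    have h := (R.measurePreserving).restrict_preimage (s := Metric.ball 0 1) measurableSet_ball
    have h2 : R ⁻¹' (Metric.ball 0 1) = Metric.ball 0 1 := by
      ext x; simp
    rw [h2] at h
    exact h
  unfold DD
  rw [← hp.integral_comp R.toHomeomorph.measurableEmbedding]
  simp

lemma ae_ne (u : EuclideanSpace ℝ ι) (hu : u ≠ 0) : ∀ᵐ g ∂(bm ι), ⟪g, u⟫ ≠ 0 := by
  unfold bm
  refine ae_restrict_of_ae ?_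
  have h := Measure.addHaar_submodule (volume : Measure (EuclideanSpace ℝ ι)) (ℝ ∙ u)ᗮ (by
    intro h
    have : u ∈ (ℝ ∙ u)ᗮ := by rw [h]; trivial
    rw [Submodule.mem_orthogonal_singleton_iff_inner_right] at this
    exact hu (inner_self_eq_zero.1 this))
  rw [ae_iff]
  convert h using 2
  ext g
  simp [Submodule.mem_orthogonal_singleton_iff_inner_left]

lemma sgnv_neg {t : ℝ} (ht : t ≠ 0) : sgnv (-t) = - sgnv t := by
  unfold sgnv
  rcases lt_or_gt_of_ne ht with h | h
  · rw [if_pos (by linarith), if_neg (by linarith)]; simp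
  · rw [if_neg (by linarith), if_pos (by linarith)]

lemma DD_neg (u : EuclideanSpace ℝ ι) (hu : u ≠ 0) :
    DD u (-u) = 2 * (bm ι).real Set.univ := by
  have : DD u (-u) = ∫ g, (2 : ℝ) ∂(bm ι) := by
    refine integral_congr_ae ?_
    filter_upwards [ae_ne u hu] with g hg
    rw [inner_neg_right, sgnv_neg hg]
    rcases sgnv_cases ⟪g, u⟫ with h | h <;> norm_num [h]
  rw [this]; simp [mul_comm]

lemma DD_add_neg (u v : EuclideanSpace ℝ ι) (hu : u ≠ 0) :
    DD u (-u) = DD u v + DD v (-u) := by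
  unfold DD
  rw [← integral_add (dd_int _ _) (dd_int _ _)]
  refine integral_congr_ae ?_
  filter_upwards [ae_ne u hu] with g hg
  rw [inner_neg_right, sgnv_neg hg]
  rcases sgnv_cases ⟪g, u⟫ with h | h <;> rcases sgnv_cases ⟪g, v⟫ with hh | hh <;>
    norm_num [h, hh]

lemma DD_add (u v w : EuclideanSpace ℝ ι) (s a b : ℝ) (hs : 0 < s) (ha : 0 ≤ a) (hb : 0 ≤ b)
    (hab : 0 < a + b) (h : s • v = a • u + b • w) : DD u w = DD u v + DD v w := by
  unfold DD
  rw [← integral_add (dd_int _ _) (dd_int _ _)]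
  congr 1
  ext g
  have h1 : s * ⟪g, v⟫ = a * ⟪g, u⟫ + b * ⟪g, w⟫ := by
    have := congrArg (fun x => ⟪g, x⟫) h
    simpa [inner_add_right, inner_smul_right] using this
  unfold sgnv
  by_cases hu : 0 ≤ ⟪g, u⟫ <;> by_cases hw : 0 ≤ ⟪g, w⟫
  · have : 0 ≤ ⟪g, v⟫ := by
      have : 0 ≤ s * ⟪g, v⟫ := by rw [h1]; positivity
      exact nonneg_of_mul_nonneg_right this hs
    simp [hu, hw, this]
  · by_cases hv : 0 ≤ ⟪g, v⟫ <;> simp [hu, hw, hv]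
  · by_cases hv : 0 ≤ ⟪g, v⟫ <;> simp [hu, hw, hv]
  · have : ¬ 0 ≤ ⟪g, v⟫ := by
      intro hv
      have h2 : 0 ≤ s * ⟪g, v⟫ := by positivity
      push Not at hu hw
      rw [h1] at h2
      rcases ha.eq_or_lt with h3 | h3
      · have : 0 < b := by linarith
        nlinarith
      · nlinarith
    simp [hu, hw, this]

/-- points on the circle -/
noncomputable def rr (u w : EuclideanSpace ℝ ι) (θ : ℝ) : EuclideanSpace ℝ ι :=
  Real.cos θ • u + Real.sin θ • w

lemma refl_rr (u w : EuclideanSpace ℝ ι) (hu : ⟪u, u⟫ = 1) (hw : ⟪w, w⟫ = 1) (huw : ⟪u, w⟫ = 0)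
    (γ : ℝ) : ∃ R : EuclideanSpace ℝ ι ≃ₗᵢ[ℝ] EuclideanSpace ℝ ι,
      ∀ θ, R (rr u w θ) = rr u w (2 * γ - θ) := by
  have hwu : ⟪w, u⟫ = 0 := by rw [real_inner_comm]; exact huw
  have hn : ‖rr u w γ‖ = 1 := by
    have : ‖rr u w γ‖ ^ 2 = 1 := by
      rw [← real_inner_self_eq_norm_sq]
      simp only [rr, inner_add_left, inner_add_right, inner_smul_left, inner_smul_right, hu, hw, huw, hwu]
      simp
      nlinarith [Real.sin_sq_add_cos_sq γ]
    nlinarith [norm_nonneg (rr u w γ)]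
  refine ⟨(ℝ ∙ (rr u w γ)).reflection, fun θ => ?_⟩
  have hi : ⟪rr u w γ, rr u w θ⟫ = Real.cos (γ - θ) := by
    simp only [rr, inner_add_left, inner_add_right, inner_smul_left, inner_smul_right, hu, hw, huw, hwu]
    simp [Real.cos_sub]; ring
  rw [Submodule.reflection_singleton_apply, hi, hn]
  have e : 2 * γ - θ = γ + (γ - θ) := by ring
  have e2 : θ = γ - (γ - θ) := by ring
  set δ := γ - θ
  rw [e, e2]
  simp only [rr, Real.cos_add, Real.sin_add, Real.cos_sub, Real.sin_sub]
  simp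
  module

lemma DD_shift (u w : EuclideanSpace ℝ ι) (hu : ⟪u, u⟫ = 1) (hw : ⟪w, w⟫ = 1) (huw : ⟪u, w⟫ = 0)
    (α β : ℝ) : DD (rr u w α) (rr u w (α + β)) = DD (rr u w 0) (rr u w β) := by
  obtain ⟨R, hR⟩ := refl_rr u w hu hw huw ((α + β) / 2)
  rw [← DD_iso R, hR, hR, DD_symm]
  congr 2 <;> ring

lemma DD_padd (u w : EuclideanSpace ℝ ι) (hu : ⟪u, u⟫ = 1) (hw : ⟪w, w⟫ = 1) (huw : ⟪u, w⟫ = 0)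
    (α β : ℝ) (hα : 0 ≤ α) (hβ : 0 ≤ β) (h : α + β ≤ Real.pi) :
    DD (rr u w 0) (rr u w (α + β)) = DD (rr u w 0) (rr u w α) + DD (rr u w 0) (rr u w β) := by
  rw [← DD_shift u w hu hw huw α β]
  have h0 : rr u w 0 = u := by simp [rr]
  have hu0 : u ≠ 0 := by rintro rfl; simp at hu
  rcases h.eq_or_lt with h | h
  · have h1 : rr u w (α + β) = - u := by simp [rr, h]
    rw [h1, h0]
    exact DD_add_neg _ _ hu0
  rcases hα.eq_or_lt with h1 | h1
  · subst h1; simp [DD_self]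
  have s1 : 0 < Real.sin α := Real.sin_pos_of_pos_of_lt_pi h1 (by linarith)
  have s2 : 0 ≤ Real.sin β := Real.sin_nonneg_of_nonneg_of_le_pi hβ (by linarith)
  have s3 : 0 < Real.sin (α + β) := Real.sin_pos_of_pos_of_lt_pi (by linarith) h
  refine DD_add _ _ _ (Real.sin (α + β)) (Real.sin β) (Real.sin α) s3 s2 s1.le (by linarith) ?_
  simp only [rr, Real.cos_zero, Real.sin_zero]
  have c1 : Real.sin (α + β) * Real.cos α = Real.sin β + Real.sin α * Real.cos (α + β) := by
    rw [Real.sin_add, Real.cos_add]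
    linear_combination Real.sin β * Real.sin_sq_add_cos_sq α
  rw [smul_add, smul_add, smul_smul, smul_smul, smul_smul, smul_smul, c1]
  module

lemma cauchy_pi (p : ℝ → ℝ) (C : ℝ) (hp : ∀ x, 0 ≤ p x) (hC : p Real.pi = C)
    (hadd : ∀ a b, 0 ≤ a → 0 ≤ b → a + b ≤ Real.pi → p (a + b) = p a + p b)
    (θ : ℝ) (h0 : 0 ≤ θ) (h1 : θ ≤ Real.pi) : p θ = C * (θ / Real.pi) := by
  have hpi := Real.pi_pos
  have hC0 : 0 ≤ C := hC ▸ hp _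
  have mono : ∀ a b, 0 ≤ a → a ≤ b → b ≤ Real.pi → p a ≤ p b := by
    intro a b ha hab hb
    have := hadd a (b - a) ha (by linarith) (by linarith)
    rw [add_sub_cancel] at this
    linarith [hp (b - a)]
  have p0 : p 0 = 0 := by
    have := hadd 0 0 le_rfl le_rfl (by linarith)
    simp at this; exact this
  have mult : ∀ (t : ℝ), 0 ≤ t → ∀ j : ℕ, j * t ≤ Real.pi → p (j * t) = j * p t := by
    intro t ht j
    induction j with
    | zero => intro _; simp [p0]
    | succ j ih =>
      intro h
      push_cast at h ⊢
      have e : ((j : ℝ) + 1) * t = j * t + t := by ring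
      rw [e] at h ⊢
      rw [hadd _ _ (by positivity) ht h, ih (by linarith)]
      ring
  have key : ∀ m : ℕ, 0 < m → |p θ - C * (θ / Real.pi)| ≤ C * (1 / m) := by
    intro m hm
    have hm' : (0 : ℝ) < m := by exact_mod_cast hm
    have ht : 0 ≤ Real.pi / m := by positivity
    have pt : p (Real.pi / m) = C / m := by
      have := mult (Real.pi / m) ht m (by rw [mul_div_cancel₀ _ hm'.ne'])
      rw [mul_div_cancel₀ _ hm'.ne', hC] at this
      rw [this]; field_simp
    set j := ⌊θ / Real.pi * m⌋₊ with hj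
    have j1 : (j : ℝ) ≤ θ / Real.pi * m := Nat.floor_le (by positivity)
    have j2 : θ / Real.pi * m < j + 1 := Nat.lt_floor_add_one _
    have k1 : (j : ℝ) / m ≤ θ / Real.pi := by rw [div_le_iff₀ hm']; exact j1
    have k2 : θ / Real.pi ≤ (j + 1) / m := by rw [le_div_iff₀ hm']; exact j2.le
    have l1 : j * (Real.pi / m) ≤ θ := by
      rw [le_div_iff₀ hpi] at k1
      calc _ = (j : ℝ) / m * Real.pi := by ring
        _ ≤ _ := k1
    have l2 : θ - j * (Real.pi / m) ≤ Real.pi / m := by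
      rw [div_le_iff₀ hpi] at k2
      have : ((j : ℝ) + 1) / m * Real.pi = j * (Real.pi / m) + Real.pi / m := by ring
      linarith
    have b1 : p θ = j * (C / m) + p (θ - j * (Real.pi / m)) := by
      have := hadd (j * (Real.pi / m)) (θ - j * (Real.pi / m)) (by positivity) (by linarith) (by linarith)
      rw [add_sub_cancel, mult _ ht j (by linarith), pt] at this
      exact this
    have b2 : p (θ - j * (Real.pi / m)) ≤ C / m := by
      rw [← pt]
      refine mono _ _ (by linarith) l2 ?_
      exact div_le_self hpi.le (by exact_mod_cast hm)
    have b3 := hp (θ - j * (Real.pi / m))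
    have c1 := mul_le_mul_of_nonneg_left k1 hC0
    have c2 := mul_le_mul_of_nonneg_left k2 hC0
    have e1 : C * ((j : ℝ) / m) = j * (C / m) := by ring
    have e2 : C * (((j : ℝ) + 1) / m) = j * (C / m) + C / m := by ring
    have e3 : C * (1 / (m : ℝ)) = C / m := by ring
    rw [abs_le]; constructor <;> linarith
  have lim : Filter.Tendsto (fun m : ℕ => C * (1 / ((m : ℝ) + 1))) Filter.atTop (nhds (C * 0)) :=
    tendsto_one_div_add_atTop_nhds_zero_nat.const_mul C
  have : |p θ - C * (θ / Real.pi)| ≤ C * 0 :=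
    ge_of_tendsto' lim fun m => by simpa using key (m + 1) (Nat.succ_pos m)
  rw [mul_zero] at this
  have h2 := abs_eq_zero.1 (le_antisymm this (abs_nonneg _))
  linarith

lemma DD_arccos (u v : EuclideanSpace ℝ ι) (hu : ⟪u, u⟫ = 1) (hv : ⟪v, v⟫ = 1) :
    DD u v = 2 * (bm ι).real Set.univ * (Real.arccos ⟪u, v⟫ / Real.pi) := by
  have hu1 : ‖u‖ = 1 := by
    rw [real_inner_self_eq_norm_sq] at hu; nlinarith [norm_nonneg u]
  have hv1 : ‖v‖ = 1 := by
    rw [real_inner_self_eq_norm_sq] at hv; nlinarith [norm_nonneg v]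
  have hu0 : u ≠ 0 := by rintro rfl; simp at hu
  have habs : |⟪u, v⟫| ≤ 1 := by
    have := abs_real_inner_le_norm u v
    rwa [hu1, hv1, one_mul] at this
  rw [abs_le] at habs
  have hcv : ⟪v, u⟫ = ⟪u, v⟫ := real_inner_comm _ _
  set θ := Real.arccos ⟪u, v⟫ with hθ
  have hcos : Real.cos θ = ⟪u, v⟫ := Real.cos_arccos habs.1 habs.2
  have hsq := Real.sin_sq_add_cos_sq θ
  by_cases hs : Real.sin θ = 0
  · have hvu : v = Real.cos θ • u := by
      rw [← sub_eq_zero, ← inner_self_eq_zero (𝕜 := ℝ)]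
      simp only [inner_sub_left, inner_sub_right, inner_smul_left, inner_smul_right, hu, hv, hcv,
        ← hcos]
      rw [hs] at hsq
      simp
      nlinarith
    have hc : Real.cos θ = 1 ∨ Real.cos θ = -1 := by
      rw [hs] at hsq
      exact sq_eq_sq_iff_eq_or_eq_neg.1 (by linarith)
    rcases hc with hc | hc
    · have hθ0 : θ = 0 := by rw [hθ, ← hcos, hc, Real.arccos_one]
      rw [hvu, hθ0]
      simp [DD_self]
    · have hθ0 : θ = Real.pi := by rw [hθ, ← hcos, hc, Real.arccos_neg_one]
      rw [hvu, hθ0]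
      simp [DD_neg u hu0, Real.pi_ne_zero]
  · set w := (Real.sin θ)⁻¹ • (v - Real.cos θ • u) with hw
    have hw1 : ⟪w, w⟫ = 1 := by
      simp only [hw, inner_sub_left, inner_sub_right, inner_smul_left, inner_smul_right, hu, hv, hcv,
        ← hcos]
      simp
      field_simp
      linarith
    have huw : ⟪u, w⟫ = 0 := by
      simp only [hw, inner_sub_right, inner_smul_right, hu, ← hcos]
      simp
    have h := cauchy_pi (fun t => DD (rr u w 0) (rr u w t)) (2 * (bm ι).real Set.univ)
      (fun _ => DD_nonneg _ _) (by simp [rr, DD_neg u hu0])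
      (fun a b ha hb hab => DD_padd u w hu hw1 huw a b ha hb hab) θ
      (Real.arccos_nonneg _) (Real.arccos_le_pi _)
    have e0 : rr u w 0 = u := by simp [rr]
    have e1 : rr u w θ = v := by simp [rr, hw, smul_smul, hs]
    simpa only [e0, e1] using h

lemma sg_arcsin (u v : EuclideanSpace ℝ ι) (hu : ⟪u, u⟫ = 1) (hv : ⟪v, v⟫ = 1) :
    ∫ g, sgnv ⟪g, u⟫ * sgnv ⟪g, v⟫ ∂(bm ι) =
      (bm ι).real Set.univ * (2 / Real.pi * Real.arcsin ⟪u, v⟫) := by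
  have h := DD_arccos u v hu hv
  unfold DD at h
  rw [integral_sub (integrable_const _) (sgsg_int u v)] at h
  simp only [integral_const, smul_eq_mul, mul_one, Real.arccos] at h
  have hpi := Real.pi_pos
  field_simp at h ⊢
  linarith

end

section
open MeasureTheory
open scoped RealInnerProductSpace

lemma quad_expand {ι : Type} [Fintype ι] (M : Matrix ι ι ℝ) (z : ι → ℝ) :
    star z ⬝ᵥ (M.mulVec z) = ∑ i, ∑ j, M i j * (z i * z j) := by
  simp only [dotProduct, Matrix.mulVec, Finset.mul_sum, Pi.star_apply, star_trivial]
  refine Finset.sum_congr rfl fun i _ => Finset.sum_congr rfl fun j _ => by ring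

lemma psd_pow {n : ℕ} (X : Matrix (Fin n) (Fin n) ℝ) (hX : X.PosSemidef) (m : ℕ) :
    (X.map (fun t => t ^ (m + 1))).PosSemidef := by
  induction m with
  | zero => simpa using hX
  | succ m ih =>
    have := ih.hadamard hX
    have e : (X.map (fun t => t ^ (m + 1 + 1))) = (X.map (fun t => t ^ (m + 1))).hadamard X := by
      ext i j; simp [pow_succ]
    rw [e]; exact this

lemma quad_series {n : ℕ} (X : Matrix (Fin n) (Fin n) ℝ) (hX : X.PosSemidef) (a : ℕ → ℝ)
    (ha : ∀ m, 0 ≤ a m) (F : ℝ → ℝ) (hF : ∀ t, HasSum (fun m => a m * t ^ (2 * m + 1)) (F t))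
    (z : Fin n → ℝ) : 0 ≤ ∑ i, ∑ j, F (X i j) * (z i * z j) := by
  have hs : HasSum (fun m => ∑ i, ∑ j, (a m * (X i j) ^ (2 * m + 1)) * (z i * z j))
      (∑ i, ∑ j, F (X i j) * (z i * z j)) :=
    hasSum_sum fun i _ => hasSum_sum fun j _ => (hF (X i j)).mul_right _
  refine hs.nonneg fun m => ?_
  have := (psd_pow X hX (2 * m)).dotProduct_mulVec_nonneg z
  rw [quad_expand] at this
  have e : ∑ i, ∑ j, (a m * (X i j) ^ (2 * m + 1)) * (z i * z j) =
      a m * ∑ i, ∑ j, (X.map (fun t => t ^ (2 * m + 1))) i j * (z i * z j) := by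
    simp only [Finset.mul_sum, Matrix.map_apply, mul_assoc]
  rw [e]
  exact mul_nonneg (ha m) this

lemma sinh_pi_four : Real.sinh (Real.pi / 4) ≤ 1 := by
  have h1 : Real.pi / 4 ≤ 4 / 5 := by linarith [Real.pi_lt_d2]
  have h2 : Real.exp (4 / 5) ≤ 2.3 := by
    have h3 : Real.exp (4 / 5) ^ 5 ≤ 2.3 ^ 5 := by
      rw [← Real.exp_nat_mul]
      have : ((5 : ℕ) : ℝ) * (4 / 5) = (4 : ℕ) * 1 := by norm_num
      rw [this, Real.exp_nat_mul]
      calc Real.exp 1 ^ 4 ≤ 2.7182818286 ^ 4 := by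
            gcongr; exact Real.exp_one_lt_d9.le
        _ ≤ _ := by norm_num
    exact le_of_pow_le_pow_left₀ (by norm_num) (by norm_num) h3
  have h4 : Real.sinh (Real.pi / 4) ≤ Real.sinh (4 / 5) := Real.sinh_le_sinh.2 h1
  refine h4.trans ?_
  rw [Real.sinh_eq, Real.exp_neg]
  have h5 : (2.3 : ℝ)⁻¹ ≤ (Real.exp (4 / 5))⁻¹ := inv_anti₀ (Real.exp_pos _) h2
  norm_num at h2 h5 ⊢
  linarith

lemma ser_nonneg {n : ℕ} (X : Matrix (Fin n) (Fin n) ℝ) (hX : X.PosSemidef) (c σ : ℝ) (hc : 0 ≤ c)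
    (hσ : σ = 1 ∨ σ = -1) (z : Fin n → ℝ) :
    0 ≤ ∑ i, ∑ j, (Real.sinh (c * X i j) + σ * Real.sin (c * X i j)) * (z i * z j) := by
  refine quad_series X hX
    (fun m => (1 + σ * (-1) ^ m) * (c ^ (2 * m + 1) / (2 * m + 1).factorial)) ?_
    (fun t => Real.sinh (c * t) + σ * Real.sin (c * t)) ?_ z
  · intro m
    refine mul_nonneg ?_ (by positivity)
    rcases neg_one_pow_eq_or ℝ m with h | h <;> rcases hσ with hh | hh <;> norm_num [h, hh]
  · intro t
    have h1 := (Real.hasSum_sinh (c * t)).add ((Real.hasSum_sin (c * t)).mul_left σ)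
    convert h1 using 2 with m
    rw [mul_pow]; ring

/-- Krivine block matrix. -/
noncomputable def YY {n : ℕ} (X : Matrix (Fin n) (Fin n) ℝ) (c : ℝ) :
    Matrix (Fin n ⊕ Fin n) (Fin n ⊕ Fin n) ℝ :=
  Matrix.fromBlocks (X.map fun t => Real.sinh (c * t)) (X.map fun t => Real.sin (c * t))
    (X.map fun t => Real.sin (c * t)) (X.map fun t => Real.sinh (c * t)) +
    Matrix.diagonal (fun _ => 1 - Real.sinh c)

lemma YY_psd {n : ℕ} (X : Matrix (Fin n) (Fin n) ℝ) (hX : X.PosSemidef) (c : ℝ) (hc : 0 ≤ c)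
    (hc1 : Real.sinh c ≤ 1) : (YY X c).PosSemidef := by
  refine Matrix.PosSemidef.add ?_ (Matrix.PosSemidef.diagonal fun _ => by simpa using hc1)
  have hsym : ∀ i j, X i j = X j i := fun i j => by
    have := hX.1.apply j i; simpa using this
  refine .of_dotProduct_mulVec_nonneg ?_ fun z => ?_
  · ext i j
    rcases i with i | i <;> rcases j with j | j <;> simp [hsym i j]
  · rw [quad_expand]
    simp only [Fintype.sum_sum_type, Matrix.fromBlocks_apply₁₁, Matrix.fromBlocks_apply₁₂,
      Matrix.fromBlocks_apply₂₁, Matrix.fromBlocks_apply₂₂, Matrix.map_apply]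
    have h1 := ser_nonneg X hX c 1 hc (Or.inl rfl) (fun i => z (Sum.inl i) + z (Sum.inr i))
    have h2 := ser_nonneg X hX c (-1) hc (Or.inr rfl) (fun i => z (Sum.inl i) - z (Sum.inr i))
    refine le_of_le_of_eq (div_nonneg (add_nonneg h1 h2) (zero_le_two (α := ℝ))) ?_
    simp only [← Finset.sum_add_distrib, Finset.sum_div]
    refine Finset.sum_congr rfl fun i _ => Finset.sum_congr rfl fun j _ => by ring

open scoped MatrixOrder Matrix.Norms.L2Operator in
lemma psd_factor {ι : Type} [Fintype ι] (Y : Matrix ι ι ℝ) (hY : Y.PosSemidef) :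
    ∃ B : Matrix ι ι ℝ, Y = B.conjTranspose * B :=
  CStarAlgebra.nonneg_iff_eq_star_mul_self.mp hY.nonneg

lemma gram_of_psd {ι : Type} [Fintype ι] (Y : Matrix ι ι ℝ) (hY : Y.PosSemidef) :
    ∃ x : ι → EuclideanSpace ℝ ι, ∀ i j, ⟪x i, x j⟫ = Y i j := by
  obtain ⟨B, hB⟩ := psd_factor _ hY
  refine ⟨fun i => WithLp.toLp 2 (fun t => B t i), fun i j => ?_⟩
  rw [hB]
  simp [Matrix.mul_apply, PiLp.inner_apply, mul_comm]

lemma psd_entry_le {n : ℕ} (X : Matrix (Fin n) (Fin n) ℝ) (hX : X.PosSemidef)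
    (hd : ∀ i, X i i = 1) (i j : Fin n) : |X i j| ≤ 1 := by
  obtain ⟨x, hx⟩ := gram_of_psd X hX
  have h1 : ∀ i, ‖x i‖ = 1 := fun i => by
    have := hx i i
    rw [hd, real_inner_self_eq_norm_sq] at this; nlinarith [norm_nonneg (x i)]
  have := abs_real_inner_le_norm (x i) (x j)
  rwa [h1, h1, hx, one_mul] at this

theorem groth {n : ℕ} (A X : Matrix (Fin n) (Fin n) ℝ) (f : ℝ)
    (hA : ∀ x y : Fin n → ℝ, (∀ i, x i = 1 ∨ x i = -1) → (∀ i, y i = 1 ∨ y i = -1) →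
      ∑ i, ∑ j, x i * A i j * y j ≤ f)
    (hX : X.PosSemidef) (hd : ∀ i, X i i = 1) : ∑ i, ∑ j, A i j * X i j ≤ 2 * f := by
  have hpi := Real.pi_pos
  obtain ⟨x, hx⟩ := gram_of_psd (YY X (Real.pi / 4))
    (YY_psd X hX _ (by positivity) sinh_pi_four)
  have hx1 : ∀ a, ⟪x a, x a⟫ = 1 := by
    intro a
    rw [hx]
    rcases a with i | i <;> simp [YY, hd]
  have key : ∀ i j, ∫ g, sgnv ⟪g, x (Sum.inl i)⟫ * sgnv ⟪g, x (Sum.inr j)⟫ ∂(bm (Fin n ⊕ Fin n)) =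
      (bm (Fin n ⊕ Fin n)).real Set.univ * (X i j / 2) := by
    intro i j
    rw [sg_arcsin _ _ (hx1 _) (hx1 _), hx]
    have e : YY X (Real.pi / 4) (Sum.inl i) (Sum.inr j) = Real.sin (Real.pi / 4 * X i j) := by
      simp [YY]
    have hb := abs_le.1 (psd_entry_le X hX hd i j)
    rw [e, Real.arcsin_sin (by nlinarith) (by nlinarith)]
    field_simp
    ring
  have hV := bm_pos (ι := Fin n ⊕ Fin n)
  set V := (bm (Fin n ⊕ Fin n)).real Set.univ
  have hint : ∫ g, (∑ i, ∑ j, A i j * (sgnv ⟪g, x (Sum.inl i)⟫ * sgnv ⟪g, x (Sum.inr j)⟫))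
      ∂(bm (Fin n ⊕ Fin n)) = V * ((∑ i, ∑ j, A i j * X i j) / 2) := by
    rw [integral_finsetSum Finset.univ fun i _ => integrable_finsetSum Finset.univ fun j _ =>
      (sgsg_int (x (Sum.inl i)) (x (Sum.inr j))).const_mul (A i j)]
    simp only [Finset.sum_div, Finset.mul_sum]
    refine Finset.sum_congr rfl fun i _ => ?_
    rw [integral_finsetSum Finset.univ fun j _ =>
      (sgsg_int (x (Sum.inl i)) (x (Sum.inr j))).const_mul (A i j)]
    refine Finset.sum_congr rfl fun j _ => ?_
    rw [integral_const_mul, key]; ring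
  have hle : ∫ g, (∑ i, ∑ j, A i j * (sgnv ⟪g, x (Sum.inl i)⟫ * sgnv ⟪g, x (Sum.inr j)⟫))
      ∂(bm (Fin n ⊕ Fin n)) ≤ ∫ g, f ∂(bm (Fin n ⊕ Fin n)) := by
    refine integral_mono (integrable_finsetSum _ fun i _ => integrable_finsetSum _ fun j _ =>
      (sgsg_int _ _).const_mul _) (integrable_const _) fun g => ?_
    refine le_of_eq_of_le ?_ (hA (fun i => sgnv ⟪g, x (Sum.inl i)⟫) (fun i => sgnv ⟪g, x (Sum.inr i)⟫)
      (fun _ => sgnv_cases _) (fun _ => sgnv_cases _))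
    refine Finset.sum_congr rfl fun i _ => Finset.sum_congr rfl fun j _ => by ring
  rw [hint, integral_const, smul_eq_mul] at hle
  have := le_of_mul_le_mul_left hle hV
  linarith

lemma inftyOne_bound {n : ℕ} (A : Matrix (Fin n) (Fin n) ℝ) (f : ℝ) (h : inftyOneNorm A ≤ f)
    (x y : Fin n → ℝ) (hx : ∀ i, x i = 1 ∨ x i = -1) (hy : ∀ i, y i = 1 ∨ y i = -1) :
    ∑ i, ∑ j, x i * A i j * y j ≤ f := by
  refine le_trans ?_ h
  unfold inftyOneNorm
  refine le_csSup ⟨∑ i, ∑ j, |A i j|, ?_⟩ ⟨x, y, hx, hy, rfl⟩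
  rintro r ⟨x, y, hx, hy, rfl⟩
  refine Finset.sum_le_sum fun i _ => Finset.sum_le_sum fun j _ => ?_
  rcases hx i with h | h <;> rcases hy j with hh | hh <;> simp [h, hh, le_abs_self, neg_le_abs]

lemma sdp_bound {n : ℕ} (A X : Matrix (Fin n) (Fin n) ℝ) (hX : X.PosSemidef)
    (hd : ∀ i, X i i = 1) : ∑ i, ∑ j, A i j * X i j ≤ sdpNorm A := by
  obtain ⟨B, hB⟩ := psd_factor _ hX
  have hBX : ∀ i j, ∑ t, B t i * B t j = X i j := fun i j => by
    rw [hB]; simp [Matrix.mul_apply]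
  refine le_csSup ⟨∑ i, ∑ j, |A i j|, ?_⟩
    ⟨fun i t => B t i, fun i t => B t i, ?_, ?_, ?_⟩
  · rintro r ⟨x, y, hx, hy, rfl⟩
    refine Finset.sum_le_sum fun i _ => Finset.sum_le_sum fun j _ => ?_
    have h1 : |∑ t, x i t * y j t| ≤ 1 := by
      have := Finset.sum_mul_sq_le_sq_mul_sq Finset.univ (x i) (y j)
      rw [hx, hy] at this
      exact (sq_le_one_iff_abs_le_one _).1 (by linarith)
    calc _ ≤ |A i j * ∑ t, x i t * y j t| := le_abs_self _
      _ = |A i j| * |∑ t, x i t * y j t| := abs_mul _ _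
      _ ≤ |A i j| * 1 := by gcongr
      _ = _ := mul_one _
  · intro i; rw [← hd i, ← hBX]; simp [sq]
  · intro i; rw [← hd i, ← hBX]; simp [sq]
  · simp only [hBX]

lemma P_psd {n k : ℕ} (hk : 2 < k) (c : Fin n → Fin k) (P : Matrix (Fin n) (Fin n) ℝ)
    (hP : ∀ i j, P i j = if c i = c j then (1 : ℝ) else -1 / ((k : ℝ) - 1)) : P.PosSemidef := by
  have hk' : (2 : ℝ) < k := by exact_mod_cast hk
  have hk1 : (0 : ℝ) < (k : ℝ) - 1 := by linarith
  refine .of_dotProduct_mulVec_nonneg ?_ fun z => ?_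
  · ext i j; simp [hP, eq_comm]
  rw [quad_expand]
  set s : Fin k → ℝ := fun l => ∑ i, if c i = l then z i else 0 with hs
  have h1 : ∑ l, s l = ∑ i, z i := by
    simp only [hs]; rw [Finset.sum_comm]; simp
  have h2 : ∑ l, s l ^ 2 = ∑ i, ∑ j, (if c i = c j then (1 : ℝ) else 0) * (z i * z j) := by
    simp only [hs, sq, Finset.sum_mul_sum]
    rw [Finset.sum_comm]
    refine Finset.sum_congr rfl fun i _ => ?_
    rw [Finset.sum_comm]
    refine Finset.sum_congr rfl fun j _ => ?_
    simp [eq_comm]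
  have h3 : (∑ l, s l) ^ 2 ≤ k * ∑ l, s l ^ 2 := by
    have := sq_sum_le_card_mul_sum_sq (s := Finset.univ) (f := s)
    simpa using this
  have h4 : ∑ i, ∑ j, P i j * (z i * z j) =
      (k * ∑ l, s l ^ 2 - (∑ l, s l) ^ 2) / ((k : ℝ) - 1) := by
    rw [h1, h2, sq, Finset.sum_mul_sum]
    simp only [Finset.mul_sum, ← Finset.sum_sub_distrib, Finset.sum_div]
    refine Finset.sum_congr rfl fun i _ => Finset.sum_congr rfl fun j _ => ?_
    rw [hP]
    split_ifs
    · field_simp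
    · field_simp; ring
  rw [h4]
  exact div_nonneg (by linarith) hk1.le

lemma PP {n k : ℕ} (hk : 2 < k) (hdvd : k ∣ n) (c : Fin n → Fin k)
    (hc : ∀ j : Fin k, (Finset.univ.filter fun i => c i = j).card = n / k)
    (P : Matrix (Fin n) (Fin n) ℝ)
    (hP : ∀ i j, P i j = if c i = c j then (1 : ℝ) else -1 / ((k : ℝ) - 1)) :
    ∑ i, ∑ j, P i j * P i j = (n : ℝ) ^ 2 / ((k : ℝ) - 1) := by
  have hk' : (2 : ℝ) < k := by exact_mod_cast hk
  have hk1 : (k : ℝ) - 1 ≠ 0 := by linarith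
  have hrow : ∀ i, ∑ j, P i j * P i j = (n : ℝ) / ((k : ℝ) - 1) := by
    intro i
    have e : ∀ j, P i j * P i j =
        (1 - 1 / ((k : ℝ) - 1) ^ 2) * (if c j = c i then 1 else 0) + 1 / ((k : ℝ) - 1) ^ 2 := by
      intro j
      rw [hP]
      by_cases h : c i = c j
      · simp [h]
      · rw [if_neg h, if_neg (Ne.symm h)]; field_simp; ring
    simp only [e, Finset.sum_add_distrib, ← Finset.mul_sum, Finset.sum_boole, hc]
    rw [Nat.cast_div hdvd (by linarith)]
    simp
    field_simp
    ring
  simp only [hrow]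
  simp
  ring

end

theorem stmt18 (n k : ℕ) (hk : 2 < k) (hdvd : k ∣ n)
    (ε f : ℝ) (hε : 0 < ε) (hf : 0 ≤ f)
    (c : Fin n → Fin k)
    (hc : ∀ j : Fin k, (Finset.univ.filter fun i => c i = j).card = n / k)
    (P : Matrix (Fin n) (Fin n) ℝ)
    (hP : ∀ i j, P i j = if c i = c j then (1 : ℝ) else -1 / ((k : ℝ) - 1))
    (Q : Matrix (Fin n) (Fin n) ℝ) (hQsym : Q.IsSymm)
    (hQ : inftyOneNorm (Q - (2 * ε) • P) ≤ f)
    (X : Matrix (Fin n) (Fin n) ℝ)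
    (hXpsd : X.PosSemidef)
    (hXdiag : ∀ i, X i i = 1)
    (hXattain : ∑ i, ∑ j, Q i j * X i j = sdpNorm Q) :
    (n : ℝ) ^ 2 / ((k : ℝ) - 1) - (2 / ε) * f ≤ ∑ i, ∑ j, P i j * X i j := by
  have hPpsd := P_psd hk c P hP
  have hPd : ∀ i, P i i = 1 := fun i => by simp [hP]
  have hb := inftyOne_bound _ f hQ
  have h1 := groth _ X f hb hXpsd hXdiag
  have h2 := groth (-(Q - (2 * ε) • P)) P f (fun x y hx hy => by
    refine le_of_eq_of_le ?_ (hb (fun i => - x i) y (fun i => by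
      rcases hx i with h | h <;> simp [h]) hy)
    refine Finset.sum_congr rfl fun i _ => Finset.sum_congr rfl fun j _ => ?_
    simp only [Matrix.neg_apply]; ring) hPpsd hPd
  have h3 := sdp_bound Q P hPpsd hPd
  rw [← hXattain] at h3
  rw [← PP hk hdvd c hc P hP]
  have e1 : ∑ i, ∑ j, (Q - (2 * ε) • P) i j * X i j =
      ∑ i, ∑ j, Q i j * X i j - 2 * ε * ∑ i, ∑ j, P i j * X i j := by
    simp only [Finset.mul_sum, ← Finset.sum_sub_distrib]
    refine Finset.sum_congr rfl fun i _ => Finset.sum_congr rfl fun j _ => ?_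
    simp; ring
  have e2 : ∑ i, ∑ j, (-(Q - (2 * ε) • P)) i j * P i j =
      2 * ε * ∑ i, ∑ j, P i j * P i j - ∑ i, ∑ j, Q i j * P i j := by
    simp only [Finset.mul_sum, ← Finset.sum_sub_distrib]
    refine Finset.sum_congr rfl fun i _ => Finset.sum_congr rfl fun j _ => ?_
    simp; ring
  rw [e1] at h1
  rw [e2] at h2
  have h4 : ε * (∑ i, ∑ j, P i j * P i j - 2 / ε * f) ≤ ε * ∑ i, ∑ j, P i j * X i j := by
    have : ε * (2 / ε * f) = 2 * f := by field_simp
    rw [mul_sub, this]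
    linarith
  exact le_of_mul_le_mul_left h4 hε
end
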